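/- arXiv:1910.00173 — 2 statements merged into one kernel-verified Lean document; each statement's English description precedes it below -/
import Mathlib

section
/- There is an absolute constant C such that for every α ∈ (0, 1/1000] the following hold, with f ranging over the four functions Ω̄, η̄, Ω̄ − D_R Ω̄, η̄ − D_R η̄ and g ranging over Ω̄, η̄. (a) For all R > 0 and β ∈ (0,π/2): |D_R^k f| ≤ C f for every 0 ≤ k ≤ 3, and |D_R^i D_β^j f| ≤ C α sin(β) f for all i, j ≥ 0 with i + j ≤ 3 and j ≥ 1. (b) Uniformly in R > 0: ∫_0^{π/2} R² (D_R^k g)² φ₁ dβ ≤ C α² for 0 ≤ k ≤ 3, and ∫_0^{π/2} R² (D_R^i D_β^j g)² φ₂ dβ ≤ C α³ for i + j ≤ 3, j ≥ 1; moreover ⟨(D_R^k (g − D_R g))², φ₁⟩ ≤ C α² for 0 ≤ k ≤ 3 and ⟨(D_R^i D_β^j (g − D_R g))², φ₂⟩ ≤ C α³ for i + j ≤ 3, j ≥ 1. -/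
open Real MeasureTheory Set

noncomputable section

namespace Paper

/-- The domain `(0,∞) × (0,π/2)` in the `(R,β)` variables. -/
def Qdom : Set (ℝ × ℝ) := Set.Ioi (0:ℝ) ×ˢ Set.Ioo (0:ℝ) (Real.pi/2)

/-- Inner product `⟨f,g⟩ = ∫₀^∞ ∫₀^{π/2} f g dβ dR`. -/
def inner2 (f g : ℝ → ℝ → ℝ) : ℝ :=
  ∫ R in Set.Ioi (0:ℝ), ∫ β in Set.Ioo (0:ℝ) (Real.pi/2), f R β * g R β

/-- The `L²` norm `‖f‖₂`. -/
def norm2 (f : ℝ → ℝ → ℝ) : ℝ := Real.sqrt (inner2 f f)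

/-- `‖h‖_{L²(R)}` for functions of `R` alone. -/
def normR (h : ℝ → ℝ) : ℝ := Real.sqrt (∫ R in Set.Ioi (0:ℝ), (h R)^2)

/-- `D_R = R ∂_R`. -/
def DR (f : ℝ → ℝ → ℝ) : ℝ → ℝ → ℝ := fun R β => R * deriv (fun r => f r β) R

/-- `D_R` for functions of `R` alone. -/
def DR1 (h : ℝ → ℝ) : ℝ → ℝ := fun R => R * deriv h R

/-- `D_β = sin(2β) ∂_β`. -/
def Dbeta (f : ℝ → ℝ → ℝ) : ℝ → ℝ → ℝ :=
  fun R β => Real.sin (2*β) * deriv (fun b => f R b) β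

/-- `L₁₂(Ω)(R) = ∫_R^∞ ∫₀^{π/2} Ω(s,β) sin(2β) s⁻¹ dβ ds`. -/
def L12 (Ω : ℝ → ℝ → ℝ) (R : ℝ) : ℝ :=
  ∫ s in Set.Ioi R, ∫ β in Set.Ioo (0:ℝ) (Real.pi/2), Ω s β * Real.sin (2*β) / s

/-- `L̃₁₂(Ω)(R) = L₁₂(Ω)(R) − L₁₂(Ω)(0)`. -/
def tL12 (Ω : ℝ → ℝ → ℝ) (R : ℝ) : ℝ := L12 Ω R - L12 Ω 0

/-- Compact support contained in the open domain `(0,∞)×(0,π/2)`. -/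
def suppIn (f : ℝ → ℝ → ℝ) : Prop :=
  ∃ K : Set (ℝ × ℝ), IsCompact K ∧ K ⊆ Qdom ∧ ∀ x y : ℝ, (x, y) ∉ K → f x y = 0

/-- Integrability over the domain. -/
def Integrable2 (f : ℝ → ℝ → ℝ) : Prop :=
  MeasureTheory.IntegrableOn (Function.uncurry f) Qdom

/-- `Γ(β) = (cos β)^α`. -/
def Γf (α : ℝ) (β : ℝ) : ℝ := Real.cos β ^ α

/-- The normalizing constant `c = (2/π)∫₀^{π/2} Γ(β) sin(2β) dβ`. -/
def cst (α : ℝ) : ℝ :=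
  (2/Real.pi) * ∫ β in Set.Ioo (0:ℝ) (Real.pi/2), Γf α β * Real.sin (2*β)

/-- The approximate profile `Ω̄`. -/
def Ωbar (α : ℝ) : ℝ → ℝ → ℝ := fun R β => (α / cst α) * Γf α β * (3*R/(1+R)^2)

/-- The approximate profile `η̄`. -/
def ηbar (α : ℝ) : ℝ → ℝ → ℝ := fun R β => (α / cst α) * Γf α β * (6*R/(1+R)^3)

/-- The singular weight `φ₁ = (1+R)⁴R⁻⁴ sin(2β)^{-σ}`, `σ = 99/100`. -/
def phi1 : ℝ → ℝ → ℝ := fun R β => (1+R)^4 / R^4 * Real.sin (2*β) ^ (-(99/100 : ℝ))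

/-- The singular weight `φ₂ = (1+R)⁴R⁻⁴ sin(2β)^{-γ}`, `γ = 1 + α/10`. -/
def phi2 (α : ℝ) : ℝ → ℝ → ℝ := fun R β => (1+R)^4 / R^4 * Real.sin (2*β) ^ (-(1 + α/10))

/-- The singular weight `ψ₁ = (1+R)⁴R⁻⁴ (sin β cos β)^{-σ}`. -/
def psi1 : ℝ → ℝ → ℝ := fun R β =>
  (1+R)^4 / R^4 * (Real.sin β * Real.cos β) ^ (-(99/100 : ℝ))

/-- The singular weight `ψ₂ = (1+R)⁴R⁻⁴ (sin β)^{-σ}(cos β)^{-γ}`. -/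
def psi2 (α : ℝ) : ℝ → ℝ → ℝ := fun R β =>
  (1+R)^4 / R^4 * Real.sin β ^ (-(99/100 : ℝ)) * Real.cos β ^ (-(1 + α/10))

/-- `c_ω = −(2/(πα)) L₁₂(Ω)(0)`. -/
def cω (α : ℝ) (Ω : ℝ → ℝ → ℝ) : ℝ := -(2/(Real.pi*α)) * L12 Ω 0

/-- The linearized operator `L₁`. -/
def opL1 (α : ℝ) (Ω η : ℝ → ℝ → ℝ) : ℝ → ℝ → ℝ := fun R β =>
  - DR Ω R β - (3/(1+R)) * Dbeta Ω R β - Ω R β + η R β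
  + cω α Ω * (Ωbar α R β - DR (Ωbar α) R β)

/-- The linearized operator `L₂`. -/
def opL2 (α : ℝ) (Ω η : ℝ → ℝ → ℝ) : ℝ → ℝ → ℝ := fun R β =>
  - DR η R β - (3/(1+R)) * Dbeta η R β + (-2 + 3/(1+R)) * η R β
  + (2/(Real.pi*α)) * tL12 Ω R * ηbar α R β
  + cω α Ω * (ηbar α R β - DR (ηbar α) R β)

/-- `ξ̄` in Cartesian variables. -/
def ξbarC (α : ℝ) (x y : ℝ) : ℝ :=
  -(18*α^2 / cst α) * ∫ z in Set.Ioo (0:ℝ) x,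
      (y/(y^2+z^2)) * (z ^ α * (z^2+y^2) ^ (α/2) / (1 + (z^2+y^2) ^ (α/2))^4)

/-- `ξ̄` in the `(R,β)` variables, via `x = R^{1/α} cos β`, `y = R^{1/α} sin β`. -/
def ξbar (α : ℝ) : ℝ → ℝ → ℝ := fun R β =>
  ξbarC α (R ^ (1/α) * Real.cos β) (R ^ (1/α) * Real.sin β)

/-- The linearized operator `L₃`. -/
def opL3 (α : ℝ) (Ω ξ : ℝ → ℝ → ℝ) : ℝ → ℝ → ℝ := fun R β =>
  - DR ξ R β - (3/(1+R)) * Dbeta ξ R β + (-2 - 3/(1+R)) * ξ R β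
  - (2/(Real.pi*α)) * tL12 Ω R * ξbar α R β
  + cω α Ω * (3 * ξbar α R β - DR (ξbar α) R β)

/-- Weighted Sobolev norm `H^m` with radial weight `w1` and angular weight `w2`:
`‖f‖ = Σ_{0≤k≤m} ‖(D_R^k f)√w1‖₂ + Σ_{i+j≤m−1} ‖(D_R^i D_β^{j+1} f)√w2‖₂`. -/
def Hnorm (m : ℕ) (w1 w2 : ℝ → ℝ → ℝ) (f : ℝ → ℝ → ℝ) : ℝ :=
  (∑ k ∈ Finset.range (m+1),
    norm2 (fun R β => DR^[k] f R β * Real.sqrt (w1 R β)))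
  + ∑ p ∈ (Finset.range (m+1) ×ˢ Finset.range (m+1)).filter
      (fun p => p.1 + p.2 + 1 ≤ m),
      norm2 (fun R β => DR^[p.1] (Dbeta^[p.2+1] f) R β * Real.sqrt (w2 R β))

/-- Sup of `|f|` over the domain `(0,∞)×(0,π/2)`. -/
def supDom (f : ℝ → ℝ → ℝ) : ℝ :=
  ⨆ (R : Set.Ioi (0:ℝ)) (β : Set.Ioo (0:ℝ) (Real.pi/2)), |f R.1 β.1|

/-- The weighted `C¹` norm. -/
def C1norm (α : ℝ) (f : ℝ → ℝ → ℝ) : ℝ :=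
  supDom f + supDom (fun R β => (1+R)/R * DR f R β)
  + supDom (fun R β =>
      (1 + (R * Real.sin (2*β) ^ α) ^ (-(1/40 : ℝ))) * Dbeta f R β)

/-- Boundedness of `f` on the domain. -/
def BddDom (f : ℝ → ℝ → ℝ) : Prop :=
  ∃ M : ℝ, ∀ R ∈ Set.Ioi (0:ℝ), ∀ β ∈ Set.Ioo (0:ℝ) (Real.pi/2), |f R β| ≤ M

/-- Finiteness of the weighted `C¹` norm. -/
def C1Fin (α : ℝ) (f : ℝ → ℝ → ℝ) : Prop :=
  BddDom f ∧ BddDom (fun R β => (1+R)/R * DR f R β) ∧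
  BddDom (fun R β => (1 + (R * Real.sin (2*β) ^ α) ^ (-(1/40 : ℝ))) * Dbeta f R β)

/-- The weighted `W^{l,∞}` norm. -/
def Wnorm (α : ℝ) (l : ℕ) (f : ℝ → ℝ → ℝ) : ℝ :=
  (∑ k ∈ Finset.range (l+1), supDom (DR^[k] f))
  + ∑ p ∈ (Finset.range (l+1) ×ˢ Finset.range (l+1)).filter
      (fun p => p.1 + p.2 ≤ l ∧ 1 ≤ p.2),
      supDom (fun R β => Real.sin (2*β) ^ (-(α/5)) *
        DR^[p.1] (fun R' β' => Dbeta^[p.2] f R' β' / (α/10 + Real.sin (2*β'))) R β)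

/-- Finiteness of the `W^{l,∞}` norm. -/
def WFin (α : ℝ) (l : ℕ) (f : ℝ → ℝ → ℝ) : Prop :=
  (∀ k ≤ l, BddDom (DR^[k] f)) ∧
  ∀ k j : ℕ, k + j ≤ l → 1 ≤ j →
    BddDom (fun R β => Real.sin (2*β) ^ (-(α/5)) *
      DR^[k] (fun R' β' => Dbeta^[j] f R' β' / (α/10 + Real.sin (2*β'))) R β)

/-- `I(f)(x,y) = ∫₀ˣ f(z,y)/z dz`. -/
def Ifun (f : ℝ → ℝ → ℝ) : ℝ → ℝ → ℝ := fun x y => ∫ z in Set.Ioo (0:ℝ) x, f z y / z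

/-- `D_S g = (1/α)(z ∂_z g + y ∂_y g)` in Cartesian variables. -/
def DScart (α : ℝ) (g : ℝ → ℝ → ℝ) : ℝ → ℝ → ℝ := fun a b =>
  (1/α) * (a * deriv (fun a' => g a' b) a + b * deriv (fun b' => g a b') b)

/-- `D_τ g = 2y ∂_y g − 2α (y²/(y²+z²)) D_S g` in Cartesian variables. -/
def DTcart (α : ℝ) (g : ℝ → ℝ → ℝ) : ℝ → ℝ → ℝ := fun a b =>
  2*b * deriv (fun b' => g a b') b - 2*α*(b^2/(b^2+a^2)) * DScart α g a b

/-!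
In the variable `t = tan² β` the angular operator becomes `D_β = 4 t d/dt`, and
`Γ = (1 + t) ^ (-α / 2)`. Both directions are thus governed by the Euler operator `D = R d/dR` on
the profiles `ρ_{a,b} = R ^ a / (1 + R) ^ b`, for which `D ρ_{a,b} = a ρ_{a,b} - b ρ_{a+1,b+1}`
and `ρ_{a+1,b+1} ≤ ρ_{a,b}`: iterating `D` costs only a constant. An angular derivative of `Γ`
starts from `a = 0`, `b = α / 2`, so it gains a factor `α` and a factor `t / (1 + t) = sin² β`.
Likewise `ρ_{1,b} - D ρ_{1,b} = b ρ_{2,b+1}` vanishes to second order at `R = 0`, which is what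
the weight `R⁻⁴` requires. Since everything in sight is a product of a function of `R` and a
function of `β`, the weighted integrals factor; the amplitude `α / c` is of size `α`.
-/

open Filter
open scoped ContDiff

/-! ### Powers of the Euler operator `R d/dR` -/

lemma DR1_iterate_congr {f g : ℝ → ℝ} (h : EqOn f g (Ioi 0)) (k : ℕ) :
    EqOn (DR1^[k] f) (DR1^[k] g) (Ioi 0) := by
  induction k generalizing f g with
  | zero => exact h
  | succ _ ih => exact ih fun R hR => by simp only [DR1, h.deriv isOpen_Ioi hR]

lemma DR1_iterate_const_mul (c : ℝ) (f : ℝ → ℝ) (k : ℕ) :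
    DR1^[k] (fun R => c * f R) = fun R => c * DR1^[k] f R := by
  have semiconj : Function.Semiconj (fun (f : ℝ → ℝ) R => c * f R) DR1 DR1 := fun f => by
    funext R
    simp only [DR1, deriv_const_mul_field]
    ring
  exact ((semiconj.iterate_right k).eq f).symm

lemma contDiffOn_DR1 {f : ℝ → ℝ} (hf : ContDiffOn ℝ ∞ f (Ioi 0)) :
    ContDiffOn ℝ ∞ (DR1 f) (Ioi 0) :=
  contDiffOn_id.mul (hf.deriv_of_isOpen isOpen_Ioi le_rfl)

lemma DR1_iterate_sub {f g : ℝ → ℝ} (hf : ContDiffOn ℝ ∞ f (Ioi 0))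
    (hg : ContDiffOn ℝ ∞ g (Ioi 0)) (k : ℕ) :
    EqOn (DR1^[k] (fun R => f R - g R)) (fun R => DR1^[k] f R - DR1^[k] g R) (Ioi 0) := by
  induction k generalizing f g with
  | zero => exact fun _ _ => rfl
  | succ k ih =>
    have hsub : EqOn (DR1 fun R => f R - g R) (fun R => DR1 f R - DR1 g R) (Ioi 0) := by
      intro R hR
      have differentiableAt {φ : ℝ → ℝ} (hφ : ContDiffOn ℝ ∞ φ (Ioi 0)) :
          DifferentiableAt ℝ φ R :=
        (hφ.contDiffAt (Ioi_mem_nhds hR)).differentiableAt (by simp)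
      simp only [DR1, deriv_fun_sub (differentiableAt hf) (differentiableAt hg), mul_sub]
    exact (DR1_iterate_congr hsub k).trans (ih (contDiffOn_DR1 hf) (contDiffOn_DR1 hg))

/-! ### The power profiles `R ^ a / (1 + R) ^ b` -/

/-- The model radial profile `R ↦ R ^ a / (1 + R) ^ b`. The radial factors of `Ω̄` and `η̄` are
multiples of the cases `(1, 2)` and `(1, 3)`, and `Γ(β)` is the case `(0, α / 2)` evaluated at
`R = tan² β`. -/
def powerProfile (a b R : ℝ) : ℝ := R ^ a / (1 + R) ^ b

lemma powerProfile_pos (a b : ℝ) {R : ℝ} (hR : 0 < R) : 0 < powerProfile a b R := by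
  unfold powerProfile
  positivity

lemma powerProfile_add_one (a b : ℝ) {R : ℝ} (hR : 0 < R) :
    powerProfile (a + 1) (b + 1) R = R / (1 + R) * powerProfile a b R := by
  rw [powerProfile, powerProfile, rpow_add_one hR.ne', rpow_add_one (by positivity)]
  field_simp

lemma powerProfile_add_one_le (a b : ℝ) {R : ℝ} (hR : 0 < R) :
    powerProfile (a + 1) (b + 1) R ≤ powerProfile a b R := by
  rw [powerProfile_add_one a b hR]
  exact mul_le_of_le_one_left (powerProfile_pos a b hR).le
    ((div_le_one (by positivity)).2 (by linarith))

lemma powerProfile_le_of_le (a : ℝ) {b b' R : ℝ} (h : b ≤ b') (hR : 0 < R) :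
    powerProfile a b' R ≤ powerProfile a b R := by
  unfold powerProfile
  gcongr
  linarith

lemma contDiffOn_powerProfile (a b : ℝ) : ContDiffOn ℝ ∞ (powerProfile a b) (Ioi 0) := by
  intro R hR
  have hR' : 0 < R := hR
  have h1 : 1 + R ≠ 0 := by positivity
  refine ((contDiffAt_id.rpow_const_of_ne hR'.ne').div
    ((contDiffAt_const.add contDiffAt_id).rpow_const_of_ne h1) ?_).contDiffWithinAt
  simp only [id_eq]
  positivity

lemma DR1_powerProfile (a b : ℝ) :
    EqOn (DR1 (powerProfile a b))
      (fun R => a * powerProfile a b R - b * powerProfile (a + 1) (b + 1) R) (Ioi 0) := by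
  intro R hR
  have hR' : 0 < R := hR
  have h1 : 1 + R ≠ 0 := by positivity
  have hderiv : HasDerivAt (powerProfile a b) _ R :=
    ((hasDerivAt_id R).rpow_const (p := a) (Or.inl hR'.ne')).div
      (((hasDerivAt_id R).const_add 1).rpow_const (p := b) (Or.inl h1)) 
        (show (1 + R) ^ b ≠ 0 by positivity)
  simp only [powerProfile_add_one a b hR']
  rw [DR1, hderiv.deriv, powerProfile, id_eq, rpow_sub_one hR'.ne', rpow_sub_one h1]
  field_simp

lemma sub_DR1_eqOn_powerProfile {b c : ℝ} {h : ℝ → ℝ}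
    (hh : EqOn h (fun R => c * powerProfile 1 b R) (Ioi 0)) :
    EqOn (fun R => h R - DR1 h R) (fun R => c * b * powerProfile 2 (b + 1) R) (Ioi 0) := by
  intro R hR
  have hDR : DR1 h R = c * DR1 (powerProfile 1 b) R := by
    rw [← Function.iterate_one DR1, DR1_iterate_congr hh 1 hR, DR1_iterate_const_mul]
  beta_reduce
  rw [hDR, hh hR, DR1_powerProfile 1 b hR, one_add_one_eq_two]
  ring

lemma DR1_iterate_succ_powerProfile (a b : ℝ) (k : ℕ) {R : ℝ} (hR : 0 < R) :
    DR1^[k + 1] (powerProfile a b) R = a * DR1^[k] (powerProfile a b) R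
      - b * DR1^[k] (powerProfile (a + 1) (b + 1)) R := by
  rw [Function.iterate_succ_apply, DR1_iterate_congr (DR1_powerProfile a b) k hR,
    DR1_iterate_sub (contDiffOn_const.mul (contDiffOn_powerProfile a b))
      (contDiffOn_const.mul (contDiffOn_powerProfile (a + 1) (b + 1))) k hR,
    DR1_iterate_const_mul, DR1_iterate_const_mul]

lemma abs_DR1_iterate_powerProfile_le {a b M : ℝ} {k : ℕ} (ha : |a| + k ≤ M) (hb : |b| + k ≤ M)
    {R : ℝ} (hR : 0 < R) :
    |DR1^[k] (powerProfile a b) R| ≤ (2 * M) ^ k * powerProfile a b R := by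
  induction k generalizing a b with
  | zero => simp [abs_of_pos (powerProfile_pos a b hR)]
  | succ k ih =>
    push_cast at ha hb
    have hM : 0 ≤ M := by linarith [abs_nonneg a, k.cast_nonneg (α := ℝ)]
    have ha1 := abs_add_le a 1
    have hb1 := abs_add_le b 1
    rw [abs_one] at ha1 hb1
    have shifted : |DR1^[k] (powerProfile (a + 1) (b + 1)) R| ≤ (2 * M) ^ k * powerProfile a b R :=
      (ih (by linarith) (by linarith)).trans
        (mul_le_mul_of_nonneg_left (powerProfile_add_one_le a b hR) (by positivity))
    rw [DR1_iterate_succ_powerProfile a b k hR]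
    calc |a * DR1^[k] (powerProfile a b) R - b * DR1^[k] (powerProfile (a + 1) (b + 1)) R|
        ≤ |a| * |DR1^[k] (powerProfile a b) R|
          + |b| * |DR1^[k] (powerProfile (a + 1) (b + 1)) R| := by
          rw [← abs_mul, ← abs_mul]
          exact abs_sub _ _
      _ ≤ M * ((2 * M) ^ k * powerProfile a b R) + M * ((2 * M) ^ k * powerProfile a b R) := by
          gcongr
          · linarith
          · exact ih (by linarith) (by linarith)
          · linarith
      _ = (2 * M) ^ (k + 1) * powerProfile a b R := by ring

lemma abs_DR1_iterate_powerProfile_le_of_le {a b M : ℝ} {k N : ℕ} (hM : 1 ≤ M) (hk : k ≤ N)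
    (ha : |a| + N ≤ M) (hb : |b| + N ≤ M) {R : ℝ} (hR : 0 < R) :
    |DR1^[k] (powerProfile a b) R| ≤ (2 * M) ^ N * powerProfile a b R := by
  have hkN : (k : ℝ) ≤ N := by exact_mod_cast hk
  calc |DR1^[k] (powerProfile a b) R| ≤ (2 * M) ^ k * powerProfile a b R :=
        abs_DR1_iterate_powerProfile_le (by linarith) (by linarith) hR
    _ ≤ (2 * M) ^ N * powerProfile a b R :=
        mul_le_mul_of_nonneg_right (pow_le_pow_right₀ (by linarith) hk) (powerProfile_pos a b hR).le

lemma exists_abs_DR1_iterate_le (N : ℕ) {a b c : ℝ} {h : ℝ → ℝ} (hc : 0 ≤ c)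
    (hh : EqOn h (fun R => c * powerProfile a b R) (Ioi 0)) :
    ∃ K : ℝ, 0 ≤ K ∧ ∀ k ≤ N, ∀ R > 0, |DR1^[k] h R| ≤ K * h R := by
  set M := max |a| |b| + N + 1
  have ha := le_max_left |a| |b|
  have hb := le_max_right |a| |b|
  have hM : 1 ≤ M := by linarith [abs_nonneg a, N.cast_nonneg (α := ℝ)]
  refine ⟨(2 * M) ^ N, by positivity, fun k hk R hR => ?_⟩
  rw [DR1_iterate_congr hh k hR, DR1_iterate_const_mul, hh hR, abs_mul, abs_of_nonneg hc,
    mul_left_comm]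
  exact mul_le_mul_of_nonneg_left
    (abs_DR1_iterate_powerProfile_le_of_le hM hk (by linarith) (by linarith) hR) hc

/-! ### The angular operator in the variable `tan² β` -/

/-- `D_β = sin(2β) d/dβ` for functions of `β` alone. -/
def Dβ1 (G : ℝ → ℝ) : ℝ → ℝ := fun β => sin (2 * β) * deriv G β

lemma sin_pos_of_mem {β : ℝ} (hβ : β ∈ Ioo 0 (π / 2)) : 0 < sin β :=
  sin_pos_of_pos_of_lt_pi hβ.1 (by linarith [hβ.2, pi_pos])

lemma cos_pos_of_mem {β : ℝ} (hβ : β ∈ Ioo 0 (π / 2)) : 0 < cos β :=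
  cos_pos_of_mem_Ioo ⟨by linarith [hβ.1, pi_pos], hβ.2⟩

lemma sin_two_mul_pos_of_mem {β : ℝ} (hβ : β ∈ Ioo 0 (π / 2)) : 0 < sin (2 * β) :=
  sin_pos_of_pos_of_lt_pi (by linarith [hβ.1]) (by linarith [hβ.2])

lemma tan_sq_pos_of_mem {β : ℝ} (hβ : β ∈ Ioo 0 (π / 2)) : 0 < tan β ^ 2 :=
  pow_pos (tan_pos_of_pos_of_lt_pi_div_two hβ.1 hβ.2) 2

lemma Dβ1_comp_tan_sq {F G : ℝ → ℝ} (hF : DifferentiableOn ℝ F (Ioi 0))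
    (hG : EqOn G (fun β => F (tan β ^ 2)) (Ioo 0 (π / 2))) :
    EqOn (Dβ1 G) (fun β => 4 * DR1 F (tan β ^ 2)) (Ioo 0 (π / 2)) := by
  intro β hβ
  have hcos := (cos_pos_of_mem hβ).ne'
  have hderiv := (hF.differentiableAt (Ioi_mem_nhds (tan_sq_pos_of_mem hβ))).hasDerivAt.comp β
    ((hasDerivAt_tan hcos).pow 2)
  have hGderiv : deriv G β = _ := (hG.deriv isOpen_Ioo hβ).trans hderiv.deriv
  simp only [Dβ1, hGderiv, DR1]
  rw [sin_two_mul, ← tan_mul_cos hcos]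
  field_simp
  ring

lemma Dβ1_iterate_comp_tan_sq {F G : ℝ → ℝ} (hF : ContDiffOn ℝ ∞ F (Ioi 0))
    (hG : EqOn G (fun β => F (tan β ^ 2)) (Ioo 0 (π / 2))) (j : ℕ) :
    EqOn (Dβ1^[j] G) (fun β => 4 ^ j * DR1^[j] F (tan β ^ 2)) (Ioo 0 (π / 2)) := by
  induction j generalizing F G with
  | zero => simpa using hG
  | succ j ih =>
    intro β hβ
    have hstep := ih (F := fun R => 4 * DR1 F R) (contDiffOn_const.mul (contDiffOn_DR1 hF))
      (Dβ1_comp_tan_sq (hF.differentiableOn (by simp)) hG) hβ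
    rw [Function.iterate_succ_apply, hstep, DR1_iterate_const_mul, Function.iterate_succ_apply]
    ring

lemma powerProfile_zero_tan_sq (α : ℝ) {β : ℝ} (hβ : β ∈ Ioo 0 (π / 2)) :
    powerProfile 0 (α / 2) (tan β ^ 2) = Γf α β := by
  have hcos := cos_pos_of_mem hβ
  rw [powerProfile, rpow_zero, one_div, ← inv_rpow (by positivity), inv_one_add_tan_sq hcos.ne',
    ← rpow_natCast, ← rpow_mul hcos.le, Γf]
  congr 1
  push_cast
  ring

lemma powerProfile_one_tan_sq (α : ℝ) {β : ℝ} (hβ : β ∈ Ioo 0 (π / 2)) :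
    powerProfile 1 (α / 2 + 1) (tan β ^ 2) = sin β ^ 2 * Γf α β := by
  have h := powerProfile_add_one 0 (α / 2) (tan_sq_pos_of_mem hβ)
  rwa [zero_add, tan_sq_div_one_add_tan_sq (cos_pos_of_mem hβ).ne',
    powerProfile_zero_tan_sq α hβ] at h

lemma exists_abs_Dβ1_iterate_Γf_le (N : ℕ) (A : ℝ) : ∃ L : ℝ, 0 ≤ L ∧
    ∀ α, 0 < α → α ≤ A → ∀ j, 1 ≤ j → j ≤ N → ∀ β ∈ Ioo 0 (π / 2),
      |Dβ1^[j] (Γf α) β| ≤ L * α * (sin β ^ 2 * Γf α β) := by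
  set M := |A| / 2 + N + 2 with hM_def
  have hM : 1 ≤ M := by linarith [abs_nonneg A, N.cast_nonneg (α := ℝ), hM_def]
  refine ⟨4 ^ N * (2 * M) ^ N, by positivity, fun α hα hαA j hj hjN β hβ => ?_⟩
  obtain ⟨i, rfl⟩ := Nat.exists_eq_add_of_le' hj
  have ht := tan_sq_pos_of_mem hβ
  have hαM : |α / 2 + 1| + N ≤ M := by
    rw [abs_of_pos (by positivity)]
    linarith [le_abs_self A, hM_def]
  have hradial : |DR1^[i] (powerProfile 1 (α / 2 + 1)) (tan β ^ 2)|
      ≤ (2 * M) ^ N * (sin β ^ 2 * Γf α β) := by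
    rw [← powerProfile_one_tan_sq α hβ]
    exact abs_DR1_iterate_powerProfile_le_of_le hM (by lia)
      (by rw [abs_one]; linarith [abs_nonneg A, hM_def]) hαM ht
  have hfour : (4 : ℝ) ^ (i + 1) ≤ 4 ^ N := pow_le_pow_right₀ (by norm_num) hjN
  calc |Dβ1^[i + 1] (Γf α) β|
      = 4 ^ (i + 1) * (α / 2 * |DR1^[i] (powerProfile 1 (α / 2 + 1)) (tan β ^ 2)|) := by
        rw [Dβ1_iterate_comp_tan_sq (contDiffOn_powerProfile 0 (α / 2))
          (fun β hβ => (powerProfile_zero_tan_sq α hβ).symm) (i + 1) hβ]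
        beta_reduce
        rw [DR1_iterate_succ_powerProfile _ _ _ ht, zero_mul, zero_sub, zero_add, abs_mul, abs_neg,
          abs_mul, abs_of_pos (half_pos hα), abs_of_pos (by positivity)]
    _ ≤ 4 ^ N * (α * ((2 * M) ^ N * (sin β ^ 2 * Γf α β))) := by
        gcongr
        linarith
    _ = 4 ^ N * (2 * M) ^ N * α * (sin β ^ 2 * Γf α β) := by ring

/-! ### Angular and radial integrals -/

lemma integrableOn_and_setIntegral_Ioo_of_hasDerivAt_of_nonneg {F f : ℝ → ℝ} {a b : ℝ} (hab : a ≤ b)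
    (hF : ContinuousOn F (Icc a b)) (hderiv : ∀ x ∈ Ioo a b, HasDerivAt F (f x) x)
    (hf : ∀ x ∈ Ioo a b, 0 ≤ f x) :
    IntegrableOn f (Ioo a b) ∧ ∫ x in Ioo a b, f x = F b - F a := by
  have hint := intervalIntegral.integrableOn_deriv_of_nonneg hF hderiv hf
  refine ⟨hint.mono_set Ioo_subset_Ioc_self, ?_⟩
  rw [← integral_Ioc_eq_integral_Ioo, ← intervalIntegral.integral_of_le hab,
    intervalIntegral.integral_eq_sub_of_hasDerivAt_of_le hab hF hderiv
      ((intervalIntegrable_iff_integrableOn_Ioc_of_le hab).2 hint)]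

lemma integrableOn_and_setIntegral_sin_mul_cos_rpow {q : ℝ} (hq : -1 < q) :
    IntegrableOn (fun β => sin β * cos β ^ q) (Ioo 0 (π / 2)) ∧
      ∫ β in Ioo 0 (π / 2), sin β * cos β ^ q = 1 / (q + 1) := by
  have hq' : 0 < q + 1 := by linarith
  have h := integrableOn_and_setIntegral_Ioo_of_hasDerivAt_of_nonneg
    (F := fun β => -(cos β ^ (q + 1) / (q + 1)))
    (f := fun β => sin β * cos β ^ q) pi_div_two_pos.le
    ((continuous_cos.rpow_const fun _ => Or.inr hq'.le).div_const _).neg.continuousOn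
    (fun β hβ => (((hasDerivAt_cos β).rpow_const
      (Or.inl (cos_pos_of_mem hβ).ne')).div_const _).neg.congr_deriv (by field_simp; simp))
    (fun β hβ => mul_nonneg (sin_pos_of_mem hβ).le (rpow_nonneg (cos_pos_of_mem hβ).le _))
  simpa [zero_rpow hq'.ne'] using h

lemma integrableOn_and_setIntegral_sin_rpow_mul_cos {p : ℝ} (hp : -1 < p) :
    IntegrableOn (fun β => sin β ^ p * cos β) (Ioo 0 (π / 2)) ∧
      ∫ β in Ioo 0 (π / 2), sin β ^ p * cos β = 1 / (p + 1) := by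
  have hp' : 0 < p + 1 := by linarith
  have h := integrableOn_and_setIntegral_Ioo_of_hasDerivAt_of_nonneg
    (F := fun β => sin β ^ (p + 1) / (p + 1))
    (f := fun β => sin β ^ p * cos β) pi_div_two_pos.le
    ((continuous_sin.rpow_const fun _ => Or.inr hp'.le).div_const _).continuousOn
    (fun β hβ => (((hasDerivAt_sin β).rpow_const
      (Or.inl (sin_pos_of_mem hβ).ne')).div_const _).congr_deriv (by field_simp; simp))
    (fun β hβ => mul_nonneg (rpow_nonneg (sin_pos_of_mem hβ).le _) (cos_pos_of_mem hβ).le)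
  simpa [zero_rpow hp'.ne'] using h

lemma sin_rpow_mul_cos_rpow_le {p q β : ℝ} (hp : -1 ≤ p) (hq : -1 ≤ q) (hβ : β ∈ Ioo 0 (π / 2)) :
    sin β ^ p * cos β ^ q ≤ sin β * cos β ^ q + sin β ^ p * cos β := by
  have hsin := sin_pos_of_mem hβ
  have hcos := cos_pos_of_mem hβ
  have rpow_add_two_le {x r : ℝ} (hx : 0 < x) (hx1 : x ≤ 1) (hr : -1 ≤ r) : x ^ (r + 2) ≤ x := by
    simpa using rpow_le_rpow_of_exponent_ge hx hx1 (show 1 ≤ r + 2 by linarith)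
  calc sin β ^ p * cos β ^ q = sin β ^ p * cos β ^ q * (sin β ^ 2 + cos β ^ 2) := by
        rw [sin_sq_add_cos_sq, mul_one]
    _ = sin β ^ (p + 2) * cos β ^ q + sin β ^ p * cos β ^ (q + 2) := by
        rw [rpow_add hsin, rpow_add hcos, rpow_two, rpow_two]
        ring
    _ ≤ sin β * cos β ^ q + sin β ^ p * cos β := by
        gcongr
        · exact rpow_add_two_le hsin (sin_le_one β) hp
        · exact rpow_add_two_le hcos (cos_le_one β) hq

lemma sin_two_mul_rpow_neg_le {r β : ℝ} (hr : 0 ≤ r) (hβ : β ∈ Ioo 0 (π / 2)) :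
    sin (2 * β) ^ (-r) ≤ sin β ^ (-r) * cos β ^ (-r) := by
  have hsin := sin_pos_of_mem hβ
  have hcos := cos_pos_of_mem hβ
  rw [← mul_rpow hsin.le hcos.le, sin_two_mul, mul_assoc]
  exact rpow_le_rpow_of_nonpos (by positivity) (by nlinarith [mul_pos hsin hcos]) (by linarith)

lemma setIntegral_sq_mul_sin_two_mul_rpow_le {G : ℝ → ℝ} {B m α r : ℝ} (hr : 0 ≤ r)
    (hm : -1 < 2 * m - r) (hα : -1 < 2 * α - r)
    (hG : ∀ β ∈ Ioo 0 (π / 2), |G β| ≤ B * (sin β ^ m * Γf α β)) :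
    ∫ β in Ioo 0 (π / 2), G β ^ 2 * sin (2 * β) ^ (-r)
      ≤ B ^ 2 * (1 / (2 * α - r + 1) + 1 / (2 * m - r + 1)) := by
  obtain ⟨hint_cos, hcos_eq⟩ := integrableOn_and_setIntegral_sin_mul_cos_rpow hα
  obtain ⟨hint_sin, hsin_eq⟩ := integrableOn_and_setIntegral_sin_rpow_mul_cos hm
  rw [← hcos_eq, ← hsin_eq, ← integral_add hint_cos hint_sin, ← integral_const_mul]
  refine integral_mono_of_nonneg ?_ ((hint_cos.add hint_sin).const_mul _) ?_
  all_goals filter_upwards [ae_restrict_mem measurableSet_Ioo] with β hβ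
  · exact mul_nonneg (sq_nonneg _) (rpow_nonneg (sin_two_mul_pos_of_mem hβ).le _)
  · have hsin := sin_pos_of_mem hβ
    have hcos := cos_pos_of_mem hβ
    have hsq : G β ^ 2 ≤ (B * (sin β ^ m * Γf α β)) ^ 2 := by
      rw [← sq_abs]
      gcongr
      exact hG β hβ
    have rpow_two_mul_sub {x : ℝ} (hx : 0 < x) (s : ℝ) :
        x ^ (2 * s - r) = (x ^ s) ^ 2 * x ^ (-r) := by
      rw [sub_eq_add_neg, rpow_add hx, mul_comm 2 s, rpow_mul hx.le, rpow_two]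
    calc G β ^ 2 * sin (2 * β) ^ (-r)
        ≤ (B * (sin β ^ m * Γf α β)) ^ 2 * (sin β ^ (-r) * cos β ^ (-r)) :=
          mul_le_mul hsq (sin_two_mul_rpow_neg_le hr hβ)
            (rpow_nonneg (sin_two_mul_pos_of_mem hβ).le _) (sq_nonneg _)
      _ = B ^ 2 * (sin β ^ (2 * m - r) * cos β ^ (2 * α - r)) := by
          rw [rpow_two_mul_sub hsin, rpow_two_mul_sub hcos, Γf]
          ring
      _ ≤ B ^ 2 * (sin β * cos β ^ (2 * α - r) + sin β ^ (2 * m - r) * cos β) := by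
          gcongr
          exact sin_rpow_mul_cos_rpow_le hm.le hα.le hβ

lemma cst_eq {α : ℝ} (hα : 0 < α) : cst α = 4 / (π * (α + 2)) := by
  have hint : ∫ β in Ioo 0 (π / 2), Γf α β * sin (2 * β) = 2 * (1 / (α + 1 + 1)) := by
    rw [← (integrableOn_and_setIntegral_sin_mul_cos_rpow (q := α + 1) (by linarith)).2,
      ← integral_const_mul]
    refine setIntegral_congr_fun measurableSet_Ioo fun β hβ => ?_
    simp only [Γf]
    rw [sin_two_mul, rpow_add_one (cos_pos_of_mem hβ).ne']
    ring
  rw [cst, hint]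
  field_simp
  ring

lemma cst_pos {α : ℝ} (hα : 0 < α) : 0 < cst α := by
  rw [cst_eq hα]
  positivity

lemma sq_div_cst_le {α A : ℝ} (hα : 0 < α) (hαA : α ≤ A) :
    (α / cst α) ^ 2 ≤ (π * (A + 2) / 4) ^ 2 * α ^ 2 := by
  rw [cst_eq hα, div_div_eq_mul_div, ← mul_pow]
  gcongr
  rw [mul_div_assoc, mul_comm α]
  gcongr

lemma sq_div_cst_mul_mul_le {α A C J K x y : ℝ} {n : ℕ} (hα : 0 < α) (hαA : α ≤ A) (hJ : 0 ≤ J)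
    (hx : 0 ≤ x) (hxK : x ≤ K) (hy : y ≤ J * α ^ n) (hC : (π * (A + 2) / 4) ^ 2 * K * J ≤ C) :
    (α / cst α) ^ 2 * x * y ≤ C * α ^ (2 + n) :=
  calc (α / cst α) ^ 2 * x * y ≤ (α / cst α) ^ 2 * x * (J * α ^ n) := by gcongr
    _ ≤ (π * (A + 2) / 4) ^ 2 * α ^ 2 * K * (J * α ^ n) := by
        gcongr
        exact sq_div_cst_le hα hαA
    _ = (π * (A + 2) / 4) ^ 2 * K * J * α ^ (2 + n) := by ring
    _ ≤ C * α ^ (2 + n) := by gcongr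

lemma setIntegral_Γf_sq_mul_le {α : ℝ} (hα : 0 < α) :
    ∫ β in Ioo 0 (π / 2), Γf α β ^ 2 * sin (2 * β) ^ (-(99 / 100 : ℝ)) ≤ 200 := by
  have h := setIntegral_sq_mul_sin_two_mul_rpow_le (G := Γf α) (B := 1) (m := 0) (α := α)
    (r := 99 / 100) (by norm_num) (by norm_num) (by linarith) fun β hβ => by
      simp [Γf, abs_of_nonneg (rpow_nonneg (cos_pos_of_mem hβ).le α)]
  have hcos : 1 / (2 * α - 99 / 100 + 1) ≤ 100 := by
    rw [div_le_iff₀ (by linarith)]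
    linarith
  have hsin : 1 / (2 * 0 - 99 / 100 + 1) = (100 : ℝ) := by norm_num
  rw [hsin, one_pow, one_mul] at h
  linarith

/- `D_β^j Γ` is `α` times a function vanishing to second order at `β = 0`, so the weight is
integrable against its square there exactly for `α < 40`; near `β = π / 2` the integral is of size
`1 / α`, which costs one of the two factors `α`. -/
lemma exists_setIntegral_Dβ1_iterate_Γf_sq_mul_le (N : ℕ) {A : ℝ} (hA : A < 40) :
    ∃ J : ℝ, 0 ≤ J ∧ ∀ α, 0 < α → α ≤ A → ∀ j, 1 ≤ j → j ≤ N →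
      ∫ β in Ioo 0 (π / 2), Dβ1^[j] (Γf α) β ^ 2 * sin (2 * β) ^ (-(1 + α / 10)) ≤ J * α := by
  obtain ⟨L, -, hL⟩ := exists_abs_Dβ1_iterate_Γf_le N A
  have hgap : 0 < 4 - A / 10 := by linarith
  refine ⟨L ^ 2 * (1 + |A| / (4 - A / 10)), by positivity, fun α hα hαA j hj hjN => ?_⟩
  have h := setIntegral_sq_mul_sin_two_mul_rpow_le (G := Dβ1^[j] (Γf α)) (B := L * α) (m := 2)
    (α := α) (r := 1 + α / 10) (by positivity) (by linarith) (by linarith) fun β hβ => by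
      simpa using hL α hα hαA j hj hjN β hβ
  have hcos : α * (1 / (2 * α - (1 + α / 10) + 1)) ≤ 1 := by
    rw [mul_one_div, div_le_one (by linarith)]
    linarith
  have hsin : α * (1 / (2 * 2 - (1 + α / 10) + 1)) ≤ |A| / (4 - A / 10) := by
    rw [mul_one_div]
    gcongr
    · exact hαA.trans (le_abs_self A)
    · linarith
  calc _ ≤ _ := h
    _ = L ^ 2 * (α * (1 / (2 * α - (1 + α / 10) + 1))
        + α * (1 / (2 * 2 - (1 + α / 10) + 1))) * α := by ring
    _ ≤ L ^ 2 * (1 + |A| / (4 - A / 10)) * α := by gcongr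

lemma exists_sq_DR1_iterate_mul_le (N : ℕ) {b c : ℝ} (hb : 2 ≤ b) (hc : 0 ≤ c) {h : ℝ → ℝ}
    (hh : EqOn h (fun R => c * powerProfile 1 b R) (Ioi 0)) :
    ∃ K : ℝ, 0 ≤ K ∧
      ∀ k ≤ N, ∀ R > 0, R ^ 2 * DR1^[k] h R ^ 2 * ((1 + R) ^ 4 / R ^ 4) ≤ K := by
  obtain ⟨K, hK, hbound⟩ := exists_abs_DR1_iterate_le N hc hh
  refine ⟨(K * c) ^ 2, by positivity, fun k hk R hR => ?_⟩
  have habs : |DR1^[k] h R| ≤ K * c * powerProfile 1 2 R := by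
    refine (hbound k hk R hR).trans ?_
    rw [hh hR, mul_assoc]
    exact mul_le_mul_of_nonneg_left
      (mul_le_mul_of_nonneg_left (powerProfile_le_of_le 1 hb hR) hc) hK
  calc R ^ 2 * DR1^[k] h R ^ 2 * ((1 + R) ^ 4 / R ^ 4)
      ≤ R ^ 2 * (K * c * powerProfile 1 2 R) ^ 2 * ((1 + R) ^ 4 / R ^ 4) := by
        rw [← sq_abs (DR1^[k] h R)]
        gcongr
    _ = (K * c) ^ 2 := by
        rw [powerProfile, rpow_one, rpow_ofNat]
        field_simp

lemma exists_setIntegral_sq_DR1_iterate_mul_le (N : ℕ) {b c : ℝ} (hb : 3 ≤ b) (hc : 0 ≤ c)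
    {h : ℝ → ℝ} (hh : EqOn h (fun R => c * powerProfile 2 b R) (Ioi 0)) :
    ∃ K : ℝ, 0 ≤ K ∧
      ∀ k ≤ N, ∫ R in Ioi 0, DR1^[k] h R ^ 2 * ((1 + R) ^ 4 / R ^ 4) ≤ K := by
  obtain ⟨K, hK, hbound⟩ := exists_abs_DR1_iterate_le N hc hh
  have hint : IntegrableOn (fun R : ℝ => (R + 1) ^ (-2 : ℝ)) (Ioi 0) :=
    integrableOn_add_rpow_Ioi_of_lt (by norm_num) (by norm_num)
  refine ⟨∫ R in Ioi (0 : ℝ), (K * c) ^ 2 * (R + 1) ^ (-2 : ℝ), ?_, fun k hk => ?_⟩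
  · refine setIntegral_nonneg measurableSet_Ioi fun R (hR : 0 < R) => by positivity
  refine integral_mono_of_nonneg ?_ (hint.const_mul _) ?_
  all_goals filter_upwards [ae_restrict_mem measurableSet_Ioi] with R (hR : 0 < R)
  · simp only [Pi.zero_apply]
    positivity
  have habs : |DR1^[k] h R| ≤ K * c * powerProfile 2 3 R := by
    refine (hbound k hk R hR).trans ?_
    rw [hh hR, mul_assoc]
    exact mul_le_mul_of_nonneg_left
      (mul_le_mul_of_nonneg_left (powerProfile_le_of_le 2 hb hR) hc) hK
  calc DR1^[k] h R ^ 2 * ((1 + R) ^ 4 / R ^ 4)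
      ≤ (K * c * powerProfile 2 3 R) ^ 2 * ((1 + R) ^ 4 / R ^ 4) := by
        rw [← sq_abs (DR1^[k] h R)]
        gcongr
    _ = (K * c) ^ 2 * (R + 1) ^ (-2 : ℝ) := by
        rw [powerProfile, rpow_ofNat, rpow_ofNat, rpow_neg (by positivity), rpow_ofNat]
        field_simp
        ring

/-! ### Estimates for separated functions -/

/-- The function `(R, β) ↦ A G(β) h(R)`; the profiles `Ω̄` and `η̄` are of this form. -/
def separated (A : ℝ) (G h : ℝ → ℝ) : ℝ → ℝ → ℝ := fun R β => A * G β * h R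

lemma DR_iterate_separated (A : ℝ) (G h : ℝ → ℝ) (k : ℕ) :
    DR^[k] (separated A G h) = separated A G (DR1^[k] h) := by
  have semiconj : Function.Semiconj (separated A G) DR1 DR := fun h => by
    funext R β
    simp only [DR, DR1, separated, deriv_const_mul_field]
    ring
  exact ((semiconj.iterate_right k).eq h).symm

lemma Dbeta_iterate_separated (A : ℝ) (G h : ℝ → ℝ) (j : ℕ) :
    Dbeta^[j] (separated A G h) = separated A (Dβ1^[j] G) h := by
  have semiconj : Function.Semiconj (fun G => separated A G h) Dβ1 Dbeta := fun G => by
    funext R β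
    simp only [Dbeta, Dβ1, separated, deriv_mul_const_field, deriv_const_mul_field]
    ring
  exact ((semiconj.iterate_right j).eq G).symm

lemma separated_sub_DR (A : ℝ) (G h : ℝ → ℝ) :
    (fun R β => separated A G h R β - DR (separated A G h) R β)
      = separated A G (fun R => h R - DR1 h R) := by
  funext R β
  rw [← Function.iterate_one DR, DR_iterate_separated, Function.iterate_one]
  simp only [separated]
  ring

lemma setIntegral_sq_separated (A : ℝ) (G h W w : ℝ → ℝ) (R : ℝ) :
    ∫ β in Ioo 0 (π / 2), separated A G h R β ^ 2 * (W R * w β)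
      = A ^ 2 * (h R ^ 2 * W R) * ∫ β in Ioo 0 (π / 2), G β ^ 2 * w β := by
  rw [← integral_const_mul]
  congr 1 with β
  rw [separated]
  ring

lemma setIntegral_const_mul_sq_separated (A : ℝ) (G h W w : ℝ → ℝ) (s R : ℝ) :
    ∫ β in Ioo 0 (π / 2), s * separated A G h R β ^ 2 * (W R * w β)
      = A ^ 2 * (s * h R ^ 2 * W R) * ∫ β in Ioo 0 (π / 2), G β ^ 2 * w β := by
  simp only [mul_assoc s, integral_const_mul, setIntegral_sq_separated]
  ring

lemma inner2_sq_separated (A : ℝ) (G h W w : ℝ → ℝ) :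
    inner2 (fun R β => separated A G h R β ^ 2) (fun R β => W R * w β)
      = A ^ 2 * (∫ R in Ioi 0, h R ^ 2 * W R) * ∫ β in Ioo 0 (π / 2), G β ^ 2 * w β := by
  simp only [inner2, setIntegral_sq_separated, integral_const_mul, integral_mul_const]

/-- The pointwise bounds `D_R^k f = O(f)` and `D_R^i D_β^j f = O(α sin(β) f)`, `j ≥ 1`, for
derivatives of order at most `N` and with constant `C`. -/
def PointwiseEstimates (N : ℕ) (C α : ℝ) (f : ℝ → ℝ → ℝ) : Prop :=
  (∀ k ≤ N, ∀ R > 0, ∀ β ∈ Ioo 0 (π / 2), |DR^[k] f R β| ≤ C * f R β) ∧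
  ∀ i j : ℕ, 1 ≤ j → i + j ≤ N → ∀ R > 0, ∀ β ∈ Ioo 0 (π / 2),
    |DR^[i] (Dbeta^[j] f) R β| ≤ C * α * sin β * f R β

/-- Bounds on the squared weighted `L²` norms of `R g` (in `β`, uniformly in `R`) and `g - D_R g`
(in both variables), for derivatives of order at most `N` and with constant `C`: `O(α²)` against
`φ₁` for radial derivatives, `O(α³)` against `φ₂` once an angular derivative is present. -/
def WeightedEstimates (N : ℕ) (C α : ℝ) (g : ℝ → ℝ → ℝ) : Prop :=
  (∀ k ≤ N, ∀ R > 0,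
    (∫ β in Ioo 0 (π / 2), R ^ 2 * DR^[k] g R β ^ 2 * phi1 R β) ≤ C * α ^ 2) ∧
  (∀ i j : ℕ, 1 ≤ j → i + j ≤ N → ∀ R > 0,
    (∫ β in Ioo 0 (π / 2), R ^ 2 * DR^[i] (Dbeta^[j] g) R β ^ 2 * phi2 α R β) ≤ C * α ^ 3) ∧
  (∀ k ≤ N,
    inner2 (fun R β => DR^[k] (fun R' β' => g R' β' - DR g R' β') R β ^ 2) phi1 ≤ C * α ^ 2) ∧
  ∀ i j : ℕ, 1 ≤ j → i + j ≤ N →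
    inner2 (fun R β => DR^[i] (Dbeta^[j] fun R' β' => g R' β' - DR g R' β') R β ^ 2) (phi2 α)
      ≤ C * α ^ 3

lemma eventually_pointwiseEstimates (N : ℕ) (A : ℝ) {a b c : ℝ} (hc : 0 ≤ c) {h : ℝ → ℝ}
    (hh : EqOn h (fun R => c * powerProfile a b R) (Ioi 0)) :
    ∀ᶠ C in atTop, ∀ α, 0 < α → α ≤ A →
      PointwiseEstimates N C α (separated (α / cst α) (Γf α) h) := by
  obtain ⟨K, hK, hradial⟩ := exists_abs_DR1_iterate_le N hc hh
  obtain ⟨L, hL, hangular⟩ := exists_abs_Dβ1_iterate_Γf_le N A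
  filter_upwards [eventually_ge_atTop K, eventually_ge_atTop (L * K)] with C hKC hLKC α hα hαA
  have hamp : 0 ≤ α / cst α := (div_pos hα (cst_pos hα)).le
  have hh0 {R : ℝ} (hR : 0 < R) : 0 ≤ h R := by
    rw [hh hR]
    exact mul_nonneg hc (powerProfile_pos a b hR).le
  have hΓ {β : ℝ} (hβ : β ∈ Ioo 0 (π / 2)) : 0 ≤ Γf α β := rpow_nonneg (cos_pos_of_mem hβ).le α
  refine ⟨fun k hk R hR β hβ => ?_, fun i j hj hij R hR β hβ => ?_⟩
  · have hhR := hh0 hR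
    have hΓβ := hΓ hβ
    rw [DR_iterate_separated]
    simp only [separated]
    rw [abs_mul, abs_of_nonneg (by positivity)]
    calc α / cst α * Γf α β * |DR1^[k] h R| ≤ α / cst α * Γf α β * (C * h R) := by
          gcongr
          exact (hradial k hk R hR).trans (by gcongr)
      _ = C * (α / cst α * Γf α β * h R) := by ring
  · have hhR := hh0 hR
    have hΓβ := hΓ hβ
    have hsin := sin_pos_of_mem hβ
    rw [Dbeta_iterate_separated, DR_iterate_separated]
    simp only [separated]
    rw [abs_mul, abs_mul, abs_of_nonneg hamp]
    calc α / cst α * |Dβ1^[j] (Γf α) β| * |DR1^[i] h R|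
        ≤ α / cst α * (L * α * (sin β ^ 2 * Γf α β)) * (K * h R) := by
          gcongr
          · exact hangular α hα hαA j hj (by lia) β hβ
          · exact hradial i (by lia) R hR
      _ = L * K * α * (sin β * sin β) * (α / cst α * Γf α β * h R) := by ring
      _ ≤ C * α * (1 * sin β) * (α / cst α * Γf α β * h R) := by
          have hCα : 0 ≤ C * α := mul_nonneg (hK.trans hKC) hα.le
          gcongr
          exact sin_le_one β
      _ = C * α * sin β * (α / cst α * Γf α β * h R) := by rw [one_mul]

lemma eventually_weightedEstimates (N : ℕ) {A b c : ℝ} (hA : A < 40) (hb : 2 ≤ b) (hc : 0 ≤ c)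
    {h : ℝ → ℝ} (hh : EqOn h (fun R => c * powerProfile 1 b R) (Ioi 0)) :
    ∀ᶠ C in atTop, ∀ α, 0 < α → α ≤ A →
      WeightedEstimates N C α (separated (α / cst α) (Γf α) h) := by
  obtain ⟨K, hK, hradial⟩ := exists_sq_DR1_iterate_mul_le N hb hc hh
  obtain ⟨K', hK', hradial'⟩ :=
    exists_setIntegral_sq_DR1_iterate_mul_le N (by linarith) (by positivity)
      (sub_DR1_eqOn_powerProfile hh)
  obtain ⟨J, hJ, hangular⟩ := exists_setIntegral_Dβ1_iterate_Γf_sq_mul_le N hA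
  filter_upwards [eventually_ge_atTop ((π * (A + 2) / 4) ^ 2 * (K + K') * (J + 200))]
    with C hC α hα hαA
  have hΓ : ∫ β in Ioo 0 (π / 2), Γf α β ^ 2 * sin (2 * β) ^ (-(99 / 100 : ℝ))
      ≤ (J + 200) * α ^ 0 := by
    linarith [setIntegral_Γf_sq_mul_le hα]
  have hDΓ {i j : ℕ} (hj : 1 ≤ j) (hij : i + j ≤ N) :
      ∫ β in Ioo 0 (π / 2), Dβ1^[j] (Γf α) β ^ 2 * sin (2 * β) ^ (-(1 + α / 10))
        ≤ (J + 200) * α ^ 1 := by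
    linarith [hangular α hα hαA j hj (by lia)]
  have product_le {x y : ℝ} {n : ℕ} (hx : 0 ≤ x) (hxK : x ≤ K + K')
      (hy : y ≤ (J + 200) * α ^ n) : (α / cst α) ^ 2 * x * y ≤ C * α ^ (2 + n) :=
    sq_div_cst_mul_mul_le hα hαA (by positivity) hx hxK hy hC
  unfold WeightedEstimates
  simp only [separated_sub_DR, Dbeta_iterate_separated, DR_iterate_separated]
  refine ⟨fun k hk R hR => ?_, fun i j hj hij R hR => ?_, fun k hk => ?_, fun i j hj hij => ?_⟩
  · exact (setIntegral_const_mul_sq_separated _ _ _ (fun R => (1 + R) ^ 4 / R ^ 4) _ _ R).trans_le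
      (product_le (by positivity) (by linarith [hradial k hk R hR]) hΓ)
  · exact (setIntegral_const_mul_sq_separated _ _ _ (fun R => (1 + R) ^ 4 / R ^ 4) _ _ R).trans_le
      (product_le (by positivity) (by linarith [hradial i (by lia) R hR]) (hDΓ hj hij))
  · exact (inner2_sq_separated _ _ _ _ _).trans_le
      (product_le (integral_nonneg fun R => by positivity) (by linarith [hradial' k hk]) hΓ)
  · exact (inner2_sq_separated _ _ _ _ _).trans_le
      (product_le (integral_nonneg fun R => by positivity) (by linarith [hradial' i (by lia)])
        (hDΓ hj hij))

lemma eventually_estimates_separated (N : ℕ) {A b c : ℝ} (hA : A < 40) (hb : 2 ≤ b)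
    (hc : 0 ≤ c) {h : ℝ → ℝ} (hh : EqOn h (fun R => c * powerProfile 1 b R) (Ioi 0)) :
    ∀ᶠ C in atTop, ∀ α, 0 < α → α ≤ A →
      let g := separated (α / cst α) (Γf α) h
      PointwiseEstimates N C α g ∧ PointwiseEstimates N C α (fun R β => g R β - DR g R β) ∧
        WeightedEstimates N C α g := by
  filter_upwards [eventually_pointwiseEstimates N A hc hh,
    eventually_pointwiseEstimates N A (by positivity) (sub_DR1_eqOn_powerProfile hh),
    eventually_weightedEstimates N hA hb hc hh] with C hg hsub hweighted α hα hαA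
  exact ⟨hg α hα hαA, separated_sub_DR _ _ _ ▸ hsub α hα hαA, hweighted α hα hαA⟩

theorem profile_estimates_general (N : ℕ) {A : ℝ} (hA : A < 40) :
    ∃ C : ℝ, ∀ α, 0 < α → α ≤ A →
      (∀ f ∈ ({Ωbar α, ηbar α,
          fun R β => Ωbar α R β - DR (Ωbar α) R β,
          fun R β => ηbar α R β - DR (ηbar α) R β} : Set (ℝ → ℝ → ℝ)),
        PointwiseEstimates N C α f) ∧
      ∀ g ∈ ({Ωbar α, ηbar α} : Set (ℝ → ℝ → ℝ)), WeightedEstimates N C α g := by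
  have hΩ : EqOn (fun R => 3 * R / (1 + R) ^ 2) (fun R => 3 * powerProfile 1 2 R) (Ioi 0) :=
    fun R _ => by simp only [powerProfile, rpow_one, rpow_ofNat, mul_div_assoc]
  have hη : EqOn (fun R => 6 * R / (1 + R) ^ 3) (fun R => 6 * powerProfile 1 3 R) (Ioi 0) :=
    fun R _ => by simp only [powerProfile, rpow_one, rpow_ofNat, mul_div_assoc]
  obtain ⟨C, hCΩ, hCη⟩ :=
    ((eventually_estimates_separated N hA le_rfl (by norm_num) hΩ).and
      (eventually_estimates_separated N hA (by norm_num) (by norm_num) hη)).exists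
  refine ⟨C, fun α hα hαA => ?_⟩
  obtain ⟨hΩ_pointwise, hΩ_sub, hΩ_weighted⟩ := hCΩ α hα hαA
  obtain ⟨hη_pointwise, hη_sub, hη_weighted⟩ := hCη α hα hαA
  refine ⟨?_, ?_⟩
  · rintro f (rfl | rfl | rfl | rfl)
    exacts [hΩ_pointwise, hη_pointwise, hΩ_sub, hη_sub]
  · rintro g (rfl | rfl)
    exacts [hΩ_weighted, hη_weighted]

/-- pointwise and weighted integral estimates for the approximate
profiles `Ω̄, η̄` and the profiles `Ω̄ − D_R Ω̄, η̄ − D_R η̄`. -/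
theorem profile_estimates :
    ∃ C : ℝ, ∀ α : ℝ, 0 < α → α ≤ 1/1000 →
      (∀ f ∈ ({Ωbar α, ηbar α,
          fun R β => Ωbar α R β - DR (Ωbar α) R β,
          fun R β => ηbar α R β - DR (ηbar α) R β} : Set (ℝ → ℝ → ℝ)),
        (∀ k ≤ 3, ∀ R > (0:ℝ), ∀ β ∈ Set.Ioo (0:ℝ) (Real.pi/2),
          |DR^[k] f R β| ≤ C * f R β) ∧
        (∀ i j : ℕ, 1 ≤ j → i + j ≤ 3 →
          ∀ R > (0:ℝ), ∀ β ∈ Set.Ioo (0:ℝ) (Real.pi/2),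
            |DR^[i] (Dbeta^[j] f) R β| ≤ C * α * Real.sin β * f R β)) ∧
      (∀ g ∈ ({Ωbar α, ηbar α} : Set (ℝ → ℝ → ℝ)),
        (∀ k ≤ 3, ∀ R > (0:ℝ),
          (∫ β in Set.Ioo (0:ℝ) (Real.pi/2), R^2 * (DR^[k] g R β)^2 * phi1 R β)
            ≤ C * α^2) ∧
        (∀ i j : ℕ, 1 ≤ j → i + j ≤ 3 → ∀ R > (0:ℝ),
          (∫ β in Set.Ioo (0:ℝ) (Real.pi/2), R^2 * (DR^[i] (Dbeta^[j] g) R β)^2 * phi2 α R β)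
            ≤ C * α^3) ∧
        (∀ k ≤ 3,
          inner2 (fun R β => (DR^[k] (fun R' β' => g R' β' - DR g R' β') R β)^2) phi1
            ≤ C * α^2) ∧
        (∀ i j : ℕ, 1 ≤ j → i + j ≤ 3 →
          inner2 (fun R β =>
              (DR^[i] (Dbeta^[j] (fun R' β' => g R' β' - DR g R' β')) R β)^2) (phi2 α)
            ≤ C * α^3)) :=
  profile_estimates_general 3 (by norm_num)

end Paper
end
end

section
/- Fix α > 0. Let f : [0,∞)×(0,∞) → ℝ be twice continuously differentiable with f(0,y) = 0 for all y > 0, and define I(f)(x,y) = ∫_0^x f(z,y)/z dz. For a differentiable function g of (z,y) set (D_S g)(z,y) = (1/α)(z ∂_z g + y ∂_y g) and (D_τ g)(z,y) = 2y ∂_y g − 2α (y²/(y²+z²)) (D_S g)(z,y), and for a function F of (x,y) set (D_R F)(x,y) = (1/α)(x ∂_x F + y ∂_y F) and (D_β F)(x,y) = 2y ∂_y F − 2α (y²/(x²+y²)) (D_R F)(x,y). Then for all x, y > 0: (i) D_R I(f)(x,y) = I(D_S f)(x,y); (ii) D_β I(f)(x,y) − I(D_τ f)(x,y) = −2α (y²/(x²+y²))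 I(D_S f)(x,y) + 2α I( (y²/(y²+z²)) D_S f )(x,y), where in the last term (y²/(y²+z²)) D_S f denotes the function (z,y) ↦ (y²/(y²+z²))(D_S f)(z,y). -/
open Real MeasureTheory Set

noncomputable section

namespace Paper

/-!
Since `f` vanishes on the edge `z = 0`, so does `∂_y f`; as `f` is `C²` both are locally Lipschitz,
hence `f / z` and `∂_y f / z` stay bounded up to the edge. Therefore `∂_x I(f) = f / x`, and
differentiation under the integral sign gives `∂_y I(f) = I(∂_y f)`. On the other side, the factor
`z` in `z ∂_z f` cancels the kernel, so that `I(z ∂_z f) = ∫₀ˣ ∂_z f dz = f = x ∂_x I(f)`, which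
is (i). In (ii) the terms `2y ∂_y` commute with `I`, and only the angular weights remain.
-/

open Topology Function

/-- The quarter plane `[0,∞) × (0,∞)` on which the integrand `f` lives. The edge `z = 0` belongs to
it: smoothness up to that edge controls the kernel `1 / z` of `Ifun`. -/
def quadrant : Set (ℝ × ℝ) := Ici 0 ×ˢ Ioi 0

/-- The partial derivative `∂_y f`, as a function of both variables. -/
def derivSnd (f : ℝ → ℝ → ℝ) : ℝ → ℝ → ℝ := fun z y => deriv (f z) y

section QuarterPlane

variable {α x y z : ℝ} {f : ℝ → ℝ → ℝ}

lemma uniqueDiffOn_quadrant : UniqueDiffOn ℝ quadrant :=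
  (uniqueDiffOn_Ici 0).prod (uniqueDiffOn_Ioi 0)

lemma hasDerivAt_fst (hf : DifferentiableOn ℝ (uncurry f) quadrant) (hz : 0 < z) (hy : 0 < y) :
    HasDerivAt (fun a => f a y) (fderivWithin ℝ (uncurry f) quadrant (z, y) (1, 0)) z := by
  have h_line : HasDerivAt (fun a : ℝ => (a, y)) (1, 0) z :=
    (hasDerivAt_id z).prodMk (hasDerivAt_const z y)
  refine (hf (z, y) ⟨hz.le, hy⟩).hasFDerivWithinAt.comp_hasDerivAt z h_line ?_
  filter_upwards [lt_mem_nhds hz] with a ha using ⟨ha.le, hy⟩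

lemma hasDerivAt_snd (hf : DifferentiableOn ℝ (uncurry f) quadrant) (hz : 0 ≤ z) (hy : 0 < y) :
    HasDerivAt (f z) (fderivWithin ℝ (uncurry f) quadrant (z, y) (0, 1)) y := by
  have h_line : HasDerivAt (fun b : ℝ => (z, b)) (0, 1) y :=
    (hasDerivAt_const y z).prodMk (hasDerivAt_id y)
  refine (hf (z, y) ⟨hz, hy⟩).hasFDerivWithinAt.comp_hasDerivAt y h_line ?_
  filter_upwards [lt_mem_nhds hy] with b hb using ⟨hz, hb⟩

lemma contDiffOn_derivSnd {m n : WithTop ℕ∞} (hf : ContDiffOn ℝ n (uncurry f) quadrant)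
    (hmn : m + 1 ≤ n) : ContDiffOn ℝ m (uncurry (derivSnd f)) quadrant := by
  have hf_diff : DifferentiableOn ℝ (uncurry f) quadrant :=
    (hf.of_le (le_add_self.trans hmn)).differentiableOn_one
  refine ((hf.fderivWithin uniqueDiffOn_quadrant hmn).clm_apply
    (contDiffOn_const (c := ((0, 1) : ℝ × ℝ)))).congr ?_
  rintro ⟨z, y⟩ ⟨hz, hy⟩
  exact (hasDerivAt_snd hf_diff hz hy).deriv

lemma derivSnd_zero (hf0 : ∀ y, 0 < y → f 0 y = 0) (hy : 0 < y) : derivSnd f 0 y = 0 := by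
  have h_eq : f 0 =ᶠ[𝓝 y] fun _ => 0 := by
    filter_upwards [lt_mem_nhds hy] with b hb using hf0 b hb
  rw [derivSnd, h_eq.deriv_eq, deriv_const]

lemma continuousOn_slice (hf : ContinuousOn (uncurry f) quadrant) (hy : 0 < y) :
    ContinuousOn (fun z => f z y) (Ici 0) :=
  hf.comp (f := fun z => (z, y)) (by fun_prop) fun _ hz => ⟨hz, hy⟩

lemma continuousOn_div_kernel (hf : ContinuousOn (uncurry f) quadrant) (hy : 0 < y) :
    ContinuousOn (fun z => f z y / z) (Ioi 0) :=
  ((continuousOn_slice hf hy).mono Ioi_subset_Ici_self).div continuousOn_id fun _ hz => hz.ne'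

lemma aestronglyMeasurable_div_kernel (hf : ContinuousOn (uncurry f) quadrant) (hy : 0 < y) :
    AEStronglyMeasurable (fun z => f z y / z) (volume.restrict (Ioo 0 x)) :=
  ((continuousOn_div_kernel hf hy).mono Ioo_subset_Ioi_self).aestronglyMeasurable
    measurableSet_Ioo

lemma exists_norm_div_kernel_le {a b : ℝ} (hf : ContDiffOn ℝ 1 (uncurry f) quadrant)
    (hf0 : ∀ y, 0 < y → f 0 y = 0) (ha : 0 < a) :
    ∃ C : ℝ, ∀ z ∈ Ioo 0 x, ∀ y ∈ Icc a b, ‖f z y / z‖ ≤ C := by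
  have h_sub : Icc 0 x ×ˢ Icc a b ⊆ quadrant :=
    prod_mono Icc_subset_Ici_self fun _ hy => ha.trans_le hy.1
  have h_convex : Convex ℝ (Icc 0 x ×ˢ Icc a b) := (convex_Icc 0 x).prod (convex_Icc a b)
  obtain ⟨K, hK⟩ := ((hf.mono h_sub).locallyLipschitzOn h_convex).exists_lipschitzOnWith_of_compact
    (isCompact_Icc.prod isCompact_Icc)
  refine ⟨K, fun z hz y hy => ?_⟩
  have h_lip := hK.norm_sub_le (x := (z, y)) (y := (0, y))
    ⟨Ioo_subset_Icc_self hz, hy⟩ ⟨left_mem_Icc.2 (hz.1.trans hz.2).le, hy⟩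
  rw [norm_div, div_le_iff₀ (norm_pos_iff.2 hz.1.ne')]
  simpa [uncurry, hf0 y (ha.trans_le hy.1)] using h_lip

lemma integrableOn_div_kernel (hf : ContDiffOn ℝ 1 (uncurry f) quadrant)
    (hf0 : ∀ y, 0 < y → f 0 y = 0) (hy : 0 < y) :
    IntegrableOn (fun z => f z y / z) (Ioo 0 x) := by
  obtain ⟨C, hC⟩ := exists_norm_div_kernel_le (x := x) (b := y) hf hf0 hy
  refine IntegrableOn.of_bound measure_Ioo_lt_top
    (aestronglyMeasurable_div_kernel hf.continuousOn hy) C ?_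
  filter_upwards [ae_restrict_mem measurableSet_Ioo] with z hz
    using hC z hz y (right_mem_Icc.2 le_rfl)

lemma hasDerivAt_Ifun_fst (hf : ContDiffOn ℝ 1 (uncurry f) quadrant)
    (hf0 : ∀ y, 0 < y → f 0 y = 0) (hx : 0 < x) (hy : 0 < y) :
    HasDerivAt (fun a => Ifun f a y) (f x y / x) x := by
  have h_int : IntervalIntegrable (fun z => f z y / z) volume 0 x :=
    (intervalIntegrable_iff_integrableOn_Ioo_of_le hx.le).2 (integrableOn_div_kernel hf hf0 hy)
  have h_cont := continuousOn_div_kernel hf.continuousOn hy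
  have h_ftc := intervalIntegral.integral_hasDerivAt_right h_int
    (h_cont.stronglyMeasurableAtFilter isOpen_Ioi x hx) (h_cont.continuousAt (Ioi_mem_nhds hx))
  refine h_ftc.congr_of_eventuallyEq ?_
  filter_upwards [lt_mem_nhds hx] with a ha
  rw [Ifun, intervalIntegral.integral_of_le ha.le, integral_Ioc_eq_integral_Ioo]

lemma hasDerivAt_Ifun_snd (hf : ContDiffOn ℝ 2 (uncurry f) quadrant)
    (hf0 : ∀ y, 0 < y → f 0 y = 0) (hy : 0 < y) :
    HasDerivAt (Ifun f x) (Ifun (derivSnd f) x y) y := by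
  have hf1 : ContDiffOn ℝ 1 (uncurry f) quadrant := hf.of_le one_le_two
  have hf' : ContDiffOn ℝ 1 (uncurry (derivSnd f)) quadrant :=
    contDiffOn_derivSnd hf one_add_one_eq_two.le
  obtain ⟨C, hC⟩ := exists_norm_div_kernel_le (x := x) (b := 2 * y) hf'
    (fun _ => derivSnd_zero hf0) (half_pos hy)
  refine (hasDerivAt_integral_of_dominated_loc_of_deriv_le (bound := fun _ => C)
    (F := fun b z => f z b / z) (F' := fun b z => derivSnd f z b / z)
    (Icc_mem_nhds (half_lt_self hy) (by linarith : y < 2 * y)) ?_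
    (integrableOn_div_kernel hf1 hf0 hy) (aestronglyMeasurable_div_kernel hf'.continuousOn hy)
    ?_ (integrable_const C) ?_).2
  · filter_upwards [lt_mem_nhds hy] with b hb
      using aestronglyMeasurable_div_kernel hf1.continuousOn hb
  · filter_upwards [ae_restrict_mem measurableSet_Ioo] with z hz b hb using hC z hz b hb
  · filter_upwards [ae_restrict_mem measurableSet_Ioo] with z hz b hb
    have h_diff := hasDerivAt_snd hf1.differentiableOn_one hz.1.le ((half_pos hy).trans_le hb.1)
    exact h_diff.differentiableAt.hasDerivAt.div_const z

lemma integrableOn_deriv_fst (hf : ContDiffOn ℝ 1 (uncurry f) quadrant) (hy : 0 < y) :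
    IntegrableOn (deriv fun a => f a y) (Ioo 0 x) := by
  have h_cont : ContinuousOn
      (uncurry fun z y => fderivWithin ℝ (uncurry f) quadrant (z, y) (1, 0)) quadrant :=
    (hf.continuousOn_fderivWithin uniqueDiffOn_quadrant le_rfl).clm_apply continuousOn_const
  have h_int : IntegrableOn
      (fun z => fderivWithin ℝ (uncurry f) quadrant (z, y) (1, 0)) (Icc 0 x) :=
    ((continuousOn_slice h_cont hy).mono Icc_subset_Ici_self).integrableOn_Icc
  refine (h_int.mono_set Ioo_subset_Icc_self).congr_fun (fun z hz => ?_) measurableSet_Ioo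
  exact (hasDerivAt_fst hf.differentiableOn_one hz.1 hy).deriv.symm

lemma integral_deriv_fst (hf : ContDiffOn ℝ 1 (uncurry f) quadrant) (hx : 0 ≤ x) (hy : 0 < y) :
    ∫ z in Ioo 0 x, deriv (fun a => f a y) z = f x y - f 0 y := by
  rw [← integral_Ioc_eq_integral_Ioo, ← intervalIntegral.integral_of_le hx]
  refine intervalIntegral.integral_eq_sub_of_hasDerivAt_of_le hx
    ((continuousOn_slice hf.continuousOn hy).mono Icc_subset_Ici_self) (fun z hz => ?_)
    ((intervalIntegrable_iff_integrableOn_Ioo_of_le hx).2 (integrableOn_deriv_fst hf hy))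
  exact (hasDerivAt_fst hf.differentiableOn_one hz.1 hy).differentiableAt.hasDerivAt

lemma DScart_div_kernel (hz : z ≠ 0) :
    DScart α f z y / z = 1 / α * (deriv (fun a => f a y) z + y * (derivSnd f z y / z)) := by
  rw [DScart, derivSnd]
  field_simp

lemma integrableOn_DScart_div_kernel (hf : ContDiffOn ℝ 2 (uncurry f) quadrant)
    (hf0 : ∀ y, 0 < y → f 0 y = 0) (hy : 0 < y) :
    IntegrableOn (fun z => DScart α f z y / z) (Ioo 0 x) := by
  have h_fst := integrableOn_deriv_fst (x := x) (hf.of_le one_le_two) hy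
  have h_snd := integrableOn_div_kernel (x := x) (contDiffOn_derivSnd hf one_add_one_eq_two.le)
    (fun _ => derivSnd_zero hf0) hy
  refine IntegrableOn.congr_fun ((h_fst.add (h_snd.const_mul y)).const_mul (1 / α))
    (fun z hz => (DScart_div_kernel hz.1.ne').symm) measurableSet_Ioo

lemma Ifun_DScart (hf : ContDiffOn ℝ 2 (uncurry f) quadrant)
    (hf0 : ∀ y, 0 < y → f 0 y = 0) (hx : 0 ≤ x) (hy : 0 < y) :
    Ifun (DScart α f) x y = 1 / α * (f x y + y * Ifun (derivSnd f) x y) := by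
  have hf1 : ContDiffOn ℝ 1 (uncurry f) quadrant := hf.of_le one_le_two
  have h_snd := integrableOn_div_kernel (x := x) (contDiffOn_derivSnd hf one_add_one_eq_two.le)
    (fun _ => derivSnd_zero hf0) hy
  calc
    Ifun (DScart α f) x y
      = ∫ z in Ioo 0 x, 1 / α * (deriv (fun a => f a y) z + y * (derivSnd f z y / z)) :=
        setIntegral_congr_fun measurableSet_Ioo fun z hz => DScart_div_kernel hz.1.ne'
    _ = 1 / α * ((∫ z in Ioo 0 x, deriv (fun a => f a y) z) + y * Ifun (derivSnd f) x y) := by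
        rw [integral_const_mul, integral_add (integrableOn_deriv_fst hf1 hy) (h_snd.const_mul y),
          integral_const_mul, Ifun]
    _ = 1 / α * (f x y + y * Ifun (derivSnd f) x y) := by
        rw [integral_deriv_fst hf1 hx hy, hf0 y hy, sub_zero]

lemma DScart_Ifun (hf : ContDiffOn ℝ 2 (uncurry f) quadrant)
    (hf0 : ∀ y, 0 < y → f 0 y = 0) (hx : 0 < x) (hy : 0 < y) :
    DScart α (Ifun f) x y = Ifun (DScart α f) x y := by
  rw [Ifun_DScart hf hf0 hx.le hy, DScart, (hasDerivAt_Ifun_snd hf hf0 hy).deriv,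
    (hasDerivAt_Ifun_fst (hf.of_le one_le_two) hf0 hx hy).deriv, mul_div_cancel₀ _ hx.ne']

lemma DTcart_Ifun (hf : ContDiffOn ℝ 2 (uncurry f) quadrant)
    (hf0 : ∀ y, 0 < y → f 0 y = 0) (hx : 0 < x) (hy : 0 < y) :
    DTcart α (Ifun f) x y = 2 * y * Ifun (derivSnd f) x y
      - 2 * α * (y ^ 2 / (y ^ 2 + x ^ 2)) * Ifun (DScart α f) x y := by
  rw [DTcart, (hasDerivAt_Ifun_snd hf hf0 hy).deriv, DScart_Ifun hf hf0 hx hy]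

lemma Ifun_DTcart (hf : ContDiffOn ℝ 2 (uncurry f) quadrant)
    (hf0 : ∀ y, 0 < y → f 0 y = 0) (hy : 0 < y) :
    Ifun (DTcart α f) x y = 2 * y * Ifun (derivSnd f) x y
      - 2 * α * Ifun (fun z b => b ^ 2 / (b ^ 2 + z ^ 2) * DScart α f z b) x y := by
  have h_snd : IntegrableOn (fun z => derivSnd f z y / z) (Ioo 0 x) :=
    integrableOn_div_kernel (contDiffOn_derivSnd hf one_add_one_eq_two.le)
      (fun _ => derivSnd_zero hf0) hy
  have h_weight : Continuous fun z : ℝ => y ^ 2 / (y ^ 2 + z ^ 2) :=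
    continuous_const.div (by fun_prop) fun z => by positivity
  have h_weighted : IntegrableOn
      (fun z => y ^ 2 / (y ^ 2 + z ^ 2) * DScart α f z y / z) (Ioo 0 x) := by
    simpa only [mul_div_assoc] using IntegrableOn.continuousOn_mul_of_subset
      h_weight.continuousOn (integrableOn_DScart_div_kernel hf hf0 hy) isCompact_Icc
      measurableSet_Ioo Ioo_subset_Icc_self
  simp only [Ifun]
  rw [← integral_const_mul, ← integral_const_mul,
    ← integral_sub (h_snd.const_mul _) (h_weighted.const_mul _)]
  refine integral_congr_ae (.of_forall fun z => ?_)
  simp only [DTcart, derivSnd]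
  ring

theorem commutator_identities_general (_hα : α ≠ 0)
    (hf : ContDiffOn ℝ 2 (uncurry f) quadrant) (hf0 : ∀ y, 0 < y → f 0 y = 0)
    (hx : 0 < x) (hy : 0 < y) :
    DScart α (Ifun f) x y = Ifun (DScart α f) x y ∧
    DTcart α (Ifun f) x y - Ifun (DTcart α f) x y
      = -2 * α * (y ^ 2 / (x ^ 2 + y ^ 2)) * Ifun (DScart α f) x y
        + 2 * α * Ifun (fun z b => b ^ 2 / (b ^ 2 + z ^ 2) * DScart α f z b) x y := by
  refine ⟨DScart_Ifun hf hf0 hx hy, ?_⟩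
  rw [DTcart_Ifun hf hf0 hx hy, Ifun_DTcart hf hf0 hy, add_comm (x ^ 2)]
  ring

end QuarterPlane

/-- commutator identities between the integral operator `I` and
the differential operators `D_R, D_β` (in Cartesian form). -/
theorem commutator_identities
    (α : ℝ) (hα : 0 < α) (f : ℝ → ℝ → ℝ)
    (hf : ContDiff ℝ 2 (Function.uncurry f)) (hf0 : ∀ y : ℝ, 0 < y → f 0 y = 0) :
    ∀ x : ℝ, 0 < x → ∀ y : ℝ, 0 < y →
      DScart α (Ifun f) x y = Ifun (DScart α f) x y ∧
      DTcart α (Ifun f) x y - Ifun (DTcart α f) x y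
        = -2*α*(y^2/(x^2+y^2)) * Ifun (DScart α f) x y
          + 2*α * Ifun (fun z y' => (y'^2/(y'^2+z^2)) * DScart α f z y') x y :=
  fun _ hx _ hy => commutator_identities_general hα.ne' hf.contDiffOn hf0 hx hy

end Paper
end
end
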